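/- Let n ≥ 1 and let (A(t))_{t∈ℕ} be a sequence of confidence matrices (row-stochastic n×n matrices with nonnegative real entries) such that for some δ > 0 and all t: (1) every diagonal entry of A(t) is positive; (2) A(t)_{ij} > 0 ⟺ A(t)_{ji} > 0 for all i,j; (3) every positive entry of A(t) is greater than δ. Then for every initial opinion profile X(0) ∈ ℝⁿ, the process of continuous opinion dynamics X(t+1) = A(t)·X(t) converges: the limit X(∞) := lim_{t→∞} X(t) exists in ℝⁿ. Moreover there are a time step t₀ and a partition I₁,…,I_p of {1,…,n} (independent of X(0)) such that X(∞)_i = X(∞)_j whenever i and j lie in the same class I_l. -/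

import Mathlib

open Matrix Filter Finset

/-- A confidence matrix is a row-stochastic matrix with nonnegative entries. -/
def RowStochastic {n : ℕ} (A : Matrix (Fin n) (Fin n) ℝ) : Prop :=
  (∀ i j, 0 ≤ A i j) ∧ ∀ i, ∑ j, A i j = 1

/-- One step keeps a lower bound on a set without outgoing influence. -/
lemma lower_step {n : ℕ} {A : Matrix (Fin n) (Fin n) ℝ} (hA : RowStochastic A)
    (S : Finset (Fin n)) (hS : ∀ i ∈ S, ∀ j, j ∉ S → A i j = 0) (x : Fin n → ℝ) (c : ℝ)
    (hx : ∀ i ∈ S, c ≤ x i) : ∀ i ∈ S, c ≤ (A.mulVec x) i := by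
  intro i hi
  have h1 : c = ∑ j, A i j * c := by rw [← Finset.sum_mul, hA.2 i, one_mul]
  rw [h1]
  change _ ≤ ∑ j, A i j * x j
  refine Finset.sum_le_sum fun j _ => ?_
  by_cases hj : j ∈ S
  · exact mul_le_mul_of_nonneg_left (hx j hj) (hA.1 i j)
  · simp [hS i hi j hj]

lemma upper_step {n : ℕ} {A : Matrix (Fin n) (Fin n) ℝ} (hA : RowStochastic A)
    (S : Finset (Fin n)) (hS : ∀ i ∈ S, ∀ j, j ∉ S → A i j = 0) (x : Fin n → ℝ) (c : ℝ)
    (hx : ∀ i ∈ S, x i ≤ c) : ∀ i ∈ S, (A.mulVec x) i ≤ c := by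
  intro i hi
  have := lower_step hA S hS (-x) (-c) (fun i hi => by simpa using hx i hi) i hi
  rw [Matrix.mulVec_neg] at this
  simpa using this

/-- One step with a single influence edge. -/
lemma gain_step {n : ℕ} {A : Matrix (Fin n) (Fin n) ℝ} (hA : RowStochastic A)
    (C : Finset (Fin n)) (hC : ∀ i ∈ C, ∀ j, j ∉ C → A i j = 0) (x : Fin n → ℝ) (m d δ : ℝ)
    (hd : 0 ≤ d) (hx : ∀ i ∈ C, m ≤ x i) (i k : Fin n) (hi : i ∈ C)
    (hik : δ ≤ A i k) (hk : m + d ≤ x k) : m + δ * d ≤ (A.mulVec x) i := by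
  have h1 : (A.mulVec x) i - m = ∑ j, A i j * (x j - m) := by
    simp only [mul_sub, Finset.sum_sub_distrib, ← Finset.sum_mul, hA.2 i, one_mul]
    rfl
  have h2 : A i k * (x k - m) ≤ ∑ j, A i j * (x j - m) := by
    refine Finset.single_le_sum (f := fun j => A i j * (x j - m)) (fun j _ => ?_)
      (Finset.mem_univ k)
    by_cases hj : j ∈ C
    · exact mul_nonneg (hA.1 i j) (sub_nonneg.2 (hx j hj))
    · simp [hC i hi j hj]
  have h3 : δ * d ≤ A i k * (x k - m) :=
    mul_le_mul hik (by linarith) hd (hA.1 i k)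
  linarith

section
variable {n : ℕ} {A : ℕ → Matrix (Fin n) (Fin n) ℝ} {δ : ℝ}

lemma bounds_mono (hstoch : ∀ t, RowStochastic (A t)) {C : Finset (Fin n)} {t₀ : ℕ}
    (hC : ∀ t ≥ t₀, ∀ i ∈ C, ∀ j, j ∉ C → A t i j = 0)
    {X : ℕ → Fin n → ℝ} (hX : ∀ t, X (t + 1) = (A t).mulVec (X t))
    {s : ℕ} (hs : t₀ ≤ s) :
    (∀ m, (∀ i ∈ C, m ≤ X s i) → ∀ t ≥ s, ∀ i ∈ C, m ≤ X t i) ∧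
    (∀ M, (∀ i ∈ C, X s i ≤ M) → ∀ t ≥ s, ∀ i ∈ C, X t i ≤ M) := by
  constructor
  · intro m hm t ht
    induction t, ht using Nat.le_induction with
    | base => exact hm
    | succ t ht ih =>
      rw [hX]
      exact lower_step (hstoch t) C (hC t (hs.trans ht)) _ _ ih
  · intro m hm t ht
    induction t, ht using Nat.le_induction with
    | base => exact hm
    | succ t ht ih =>
      rw [hX]
      exact upper_step (hstoch t) C (hC t (hs.trans ht)) _ _ ih

lemma growth (hδ : 0 < δ) (hstoch : ∀ t, RowStochastic (A t))
    (hdiag : ∀ t i, 0 < A t i i)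
    (hsym : ∀ t i j, 0 < A t i j ↔ 0 < A t j i)
    (hmin : ∀ t i j, 0 < A t i j → δ < A t i j) {C : Finset (Fin n)} {t₀ : ℕ}
    (hC : ∀ t ≥ t₀, ∀ i ∈ C, ∀ j, j ∉ C → A t i j = 0)
    (hP : ∀ S ⊆ C, S.Nonempty → S ≠ C → ∀ s, ∃ t ≥ s, ∃ i ∈ S, ∃ j ∈ C, j ∉ S ∧ 0 < A t i j)
    {X : ℕ → Fin n → ℝ} (hX : ∀ t, X (t + 1) = (A t).mulVec (X t))
    {S : Finset (Fin n)} (hSC : S ⊆ C) (hSn : S.Nonempty) (hne : S ≠ C)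
    {s : ℕ} (hs : t₀ ≤ s) {m d : ℝ} (hd : 0 ≤ d)
    (hm : ∀ i ∈ C, m ≤ X s i) (hSd : ∀ i ∈ S, m + d ≤ X s i) :
    ∃ T ≥ s, ∃ S' ⊆ C, S ⊂ S' ∧ ∀ i ∈ S', m + δ * d ≤ X T i := by
  classical
  have hex := hP S hSC hSn hne s
  set t := Nat.find hex with ht
  obtain ⟨hst, i, hiS, j, hjC, hjS, hij⟩ := Nat.find_spec hex
  rw [← ht] at hst hij
  have hbd : ∀ u ≥ s, u ≤ t → ∀ i ∈ S, m + d ≤ X u i := by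
    intro u hu
    induction u, hu using Nat.le_induction with
    | base => exact fun _ => hSd
    | succ u hu ih =>
      intro hut
      rw [hX]
      refine lower_step (hstoch u) S ?_ _ _ (ih (by omega))
      intro a ha b hb
      by_cases hbC : b ∈ C
      · by_contra h0
        have hpos : 0 < A u a b := lt_of_le_of_ne ((hstoch u).1 a b) (Ne.symm h0)
        exact Nat.find_min hex (m := u) (by omega) ⟨hu, a, ha, b, hbC, hb, hpos⟩
      · exact hC u (hs.trans hu) a (hSC ha) b hbC
  refine ⟨t + 1, by omega, C.filter (fun a => ∃ k ∈ S, 0 < A t a k), filter_subset _ _, ?_, ?_⟩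
  · rw [Finset.ssubset_iff_of_subset]
    · exact ⟨j, by simpa using ⟨hjC, i, hiS, (hsym t i j).1 hij⟩, hjS⟩
    · intro a ha
      simpa using ⟨hSC ha, a, ha, hdiag t a⟩
  · intro a ha
    obtain ⟨haC, k, hk, hak⟩ := Finset.mem_filter.1 ha
    rw [hX]
    exact gain_step (hstoch t) C (hC t (hs.trans hst)) _ m d δ hd
      ((bounds_mono hstoch hC hX hs).1 m hm t hst) a k haC (hmin t a k hak).le
      (hbd t hst le_rfl k hk)

lemma spread_all (hδ : 0 < δ) (hδ1 : δ ≤ 1) (hstoch : ∀ t, RowStochastic (A t))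
    (hdiag : ∀ t i, 0 < A t i i)
    (hsym : ∀ t i j, 0 < A t i j ↔ 0 < A t j i)
    (hmin : ∀ t i j, 0 < A t i j → δ < A t i j) {C : Finset (Fin n)} {t₀ : ℕ}
    (hC : ∀ t ≥ t₀, ∀ i ∈ C, ∀ j, j ∉ C → A t i j = 0)
    (hP : ∀ S ⊆ C, S.Nonempty → S ≠ C → ∀ s, ∃ t ≥ s, ∃ i ∈ S, ∃ j ∈ C, j ∉ S ∧ 0 < A t i j)
    {X : ℕ → Fin n → ℝ} (hX : ∀ t, X (t + 1) = (A t).mulVec (X t)) {m : ℝ} (k : ℕ) :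
    ∀ S ⊆ C, S.Nonempty → #C ≤ #S + k → ∀ s ≥ t₀, ∀ d : ℝ, 0 ≤ d →
      (∀ i ∈ C, m ≤ X s i) → (∀ i ∈ S, m + d ≤ X s i) →
      ∃ T ≥ s, ∀ i ∈ C, m + δ ^ k * d ≤ X T i := by
  induction k with
  | zero =>
    intro S hS hSn hcard s hs d hd hm hSd
    have : S = C := Finset.eq_of_subset_of_card_le hS (by simpa using hcard)
    subst this
    exact ⟨s, le_rfl, by simpa using hSd⟩
  | succ k ih =>
    intro S hS hSn hcard s hs d hd hm hSd
    by_cases hne : S = C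
    · subst hne
      refine ⟨s, le_rfl, fun i hi => le_trans ?_ (hSd i hi)⟩
      have : δ ^ (k + 1) * d ≤ d := mul_le_of_le_one_left hd (pow_le_one₀ hδ.le hδ1)
      linarith
    · obtain ⟨T, hT, S', hS', hSS', hb⟩ :=
        growth hδ hstoch hdiag hsym hmin hC hP hX hS hSn hne hs hd hm hSd
      have hlt := Finset.card_lt_card hSS'
      obtain ⟨T', hT', hb'⟩ := ih S' hS' (hSn.mono hSS'.1) (by omega) T (le_trans hs hT)
        (δ * d) (by positivity) ((bounds_mono hstoch hC hX hs).1 m hm T hT) hb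
      refine ⟨T', le_trans hT hT', fun i hi => ?_⟩
      have := hb' i hi
      rw [pow_succ, mul_assoc]
      exact this

lemma contract (hδ : 0 < δ) (hδ1 : δ ≤ 1) (hstoch : ∀ t, RowStochastic (A t))
    (hdiag : ∀ t i, 0 < A t i i)
    (hsym : ∀ t i j, 0 < A t i j ↔ 0 < A t j i)
    (hmin : ∀ t i j, 0 < A t i j → δ < A t i j) {C : Finset (Fin n)} (hCn : C.Nonempty) {t₀ : ℕ}
    (hC : ∀ t ≥ t₀, ∀ i ∈ C, ∀ j, j ∉ C → A t i j = 0)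
    (hP : ∀ S ⊆ C, S.Nonempty → S ≠ C → ∀ s, ∃ t ≥ s, ∃ i ∈ S, ∃ j ∈ C, j ∉ S ∧ 0 < A t i j)
    {X : ℕ → Fin n → ℝ} (hX : ∀ t, X (t + 1) = (A t).mulVec (X t)) :
    ∃ D : ℝ, ∀ k : ℕ, ∃ T ≥ t₀, ∃ m M : ℝ, (∀ i ∈ C, m ≤ X T i ∧ X T i ≤ M) ∧
      M - m ≤ (1 - δ ^ #C) ^ k * D := by
  obtain ⟨a, haC, ha⟩ := Finset.exists_max_image C (X t₀) hCn
  obtain ⟨b, hbC, hb⟩ := Finset.exists_min_image C (X t₀) hCn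
  refine ⟨X t₀ a - X t₀ b, fun k => ?_⟩
  induction k with
  | zero => exact ⟨t₀, le_rfl, X t₀ b, X t₀ a, fun i hi => ⟨hb i hi, ha i hi⟩, by simp⟩
  | succ k ih =>
    obtain ⟨T, hT, m, M, hmM, hD⟩ := ih
    obtain ⟨c, hcC, hc⟩ := Finset.exists_max_image C (X T) hCn
    obtain ⟨T', hT', h'⟩ := spread_all hδ hδ1 hstoch hdiag hsym hmin hC hP hX (m := m) #C
      {c} (by simpa using hcC) (by simp) (by omega) T hT (X T c - m)
      (sub_nonneg.2 (hmM c hcC).1) (fun i hi => (hmM i hi).1) (by simp)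
    refine ⟨T', le_trans hT hT', m + δ ^ #C * (X T c - m), X T c, fun i hi => ⟨h' i hi, ?_⟩, ?_⟩
    · exact (bounds_mono hstoch hC hX hT).2 _ hc T' hT' i hi
    · have h0 : 0 ≤ 1 - δ ^ #C := sub_nonneg.2 (pow_le_one₀ hδ.le hδ1)
      have h1 : X T c - m ≤ (1 - δ ^ #C) ^ k * (X t₀ a - X t₀ b) := by
        linarith [(hmM c hcC).2]
      have h2 := mul_le_mul_of_nonneg_left h1 h0
      rw [pow_succ']
      linarith

lemma class_consensus (hδ : 0 < δ) (hδ1 : δ ≤ 1) (hstoch : ∀ t, RowStochastic (A t))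
    (hdiag : ∀ t i, 0 < A t i i)
    (hsym : ∀ t i j, 0 < A t i j ↔ 0 < A t j i)
    (hmin : ∀ t i j, 0 < A t i j → δ < A t i j) {C : Finset (Fin n)} (hCn : C.Nonempty) {t₀ : ℕ}
    (hC : ∀ t ≥ t₀, ∀ i ∈ C, ∀ j, j ∉ C → A t i j = 0)
    (hP : ∀ S ⊆ C, S.Nonempty → S ≠ C → ∀ s, ∃ t ≥ s, ∃ i ∈ S, ∃ j ∈ C, j ∉ S ∧ 0 < A t i j)
    {X : ℕ → Fin n → ℝ} (hX : ∀ t, X (t + 1) = (A t).mulVec (X t)) :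
    ∃ L : ℝ, ∀ i ∈ C, Tendsto (fun t => X t i) atTop (nhds L) := by
  obtain ⟨D, hD⟩ := contract hδ hδ1 hstoch hdiag hsym hmin hCn hC hP hX
  have key : ∀ ε > 0, ∃ T, ∀ t ≥ T, ∀ u ≥ T, ∀ i ∈ C, ∀ j ∈ C, |X t i - X u j| < ε := by
    intro ε hε
    have hη : 0 < δ ^ #C := by positivity
    have hη1 : δ ^ #C ≤ 1 := pow_le_one₀ hδ.le hδ1
    have hlim : Tendsto (fun k : ℕ => (1 - δ ^ #C) ^ k * D) atTop (nhds 0) := by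
      simpa using (tendsto_pow_atTop_nhds_zero_of_lt_one (r := 1 - δ ^ #C)
        (by linarith) (by linarith)).mul_const D
    obtain ⟨k, hk⟩ := (hlim.eventually (gt_mem_nhds hε)).exists
    obtain ⟨T, hT, m, M, hmM, hb⟩ := hD k
    refine ⟨T, fun t ht u hu i hi j hj => ?_⟩
    obtain ⟨hl, hr⟩ := bounds_mono hstoch hC hX hT
    have hl := hl m (fun i hi => (hmM i hi).1)
    have hr := hr M (fun i hi => (hmM i hi).2)
    have := hl t ht i hi
    have := hl u hu j hj
    have := hr t ht i hi
    have := hr u hu j hj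
    rw [abs_lt]
    constructor <;> linarith
  obtain ⟨a, ha⟩ := hCn
  have hcau : CauchySeq (fun t => X t a) := by
    rw [Metric.cauchySeq_iff]
    intro ε hε
    obtain ⟨T, hT⟩ := key ε hε
    exact ⟨T, fun t ht u hu => by rw [Real.dist_eq]; exact hT t ht u hu a ha a ha⟩
  obtain ⟨L, hL⟩ := cauchySeq_tendsto_of_complete hcau
  refine ⟨L, fun i hi => ?_⟩
  have hdiff : Tendsto (fun t => X t i - X t a) atTop (nhds 0) := by
    rw [Metric.tendsto_atTop]
    intro ε hε
    obtain ⟨T, hT⟩ := key ε hε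
    exact ⟨T, fun t ht => by simpa [Real.dist_eq] using hT t ht t ht i hi a ha⟩
  simpa using hdiff.add hL
end

/-- **Stabilization of opinion profiles.** Under positive diagonals, symmetric zero pattern
and a uniform positive lower bound `δ` on positive entries, every process of continuous
opinion dynamics `X(t+1) = A(t)·X(t)` converges, and there are a time step `t₀` and a
partition `I₁,…,I_p` of the agents (independent of `X(0)`) such that agents in the same
class have equal limit opinions. -/
theorem opinion_dynamics_stabilization
    (n : ℕ) (hn : 1 ≤ n) (A : ℕ → Matrix (Fin n) (Fin n) ℝ) (δ : ℝ) (hδ : 0 < δ)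
    (hstoch : ∀ t, RowStochastic (A t))
    (hdiag : ∀ t i, 0 < A t i i)
    (hsym : ∀ t i j, 0 < A t i j ↔ 0 < A t j i)
    (hmin : ∀ t i j, 0 < A t i j → δ < A t i j) :
    ∃ (t₀ : ℕ) (p : ℕ) (I : Fin p → Finset (Fin n)),
      (∀ l, (I l).Nonempty) ∧
      (∀ l m, l ≠ m → Disjoint (I l) (I m)) ∧
      (∀ i : Fin n, ∃ l, i ∈ I l) ∧
      ∀ X : ℕ → Fin n → ℝ, (∀ t, X (t + 1) = (A t).mulVec (X t)) →
        ∃ Xinf : Fin n → ℝ,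
          Tendsto X atTop (nhds Xinf) ∧
          ∀ l, ∀ i ∈ I l, ∀ j ∈ I l, Xinf i = Xinf j := by
  classical
  have hδ1 : δ ≤ 1 := by
    let i : Fin n := ⟨0, hn⟩
    refine (hmin 0 i i (hdiag 0 i)).le.trans ?_
    rw [← (hstoch 0).2 i]
    exact Finset.single_le_sum (f := fun j => A 0 i j) (fun j _ => (hstoch 0).1 i j)
      (Finset.mem_univ i)
  -- classes: components of the graph of edges that occur infinitely often
  let E : Fin n → Fin n → Prop := fun i j => ∃ᶠ t in atTop, 0 < A t i j
  let r : Setoid (Fin n) := Relation.EqvGen.setoid E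
  have hev : ∀ᶠ t in atTop, ∀ i j, ¬ E i j → A t i j = 0 := by
    rw [Filter.eventually_all]
    intro i
    rw [Filter.eventually_all]
    intro j
    by_cases h : E i j
    · exact Filter.Eventually.of_forall fun t ht => absurd h ht
    · have h' := Filter.not_frequently.1 h
      filter_upwards [h'] with t ht _
      exact le_antisymm (not_lt.1 ht) ((hstoch t).1 i j)
  obtain ⟨t₀, ht₀⟩ := Filter.eventually_atTop.1 hev
  let e := Fintype.equivFin (Quotient r)
  let I : Fin (Fintype.card (Quotient r)) → Finset (Fin n) :=
    fun l => Finset.univ.filter fun i => e (Quotient.mk r i) = l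
  have hI : ∀ l i, i ∈ I l ↔ e (Quotient.mk r i) = l := fun l i => by simp [I]
  have hEI : ∀ l i j, i ∈ I l → E i j → j ∈ I l := by
    intro l i j hi hij
    rw [hI] at hi ⊢
    rw [← hi]
    congr 1
    exact (Quotient.sound (s := r) (Relation.EqvGen.rel i j hij)).symm
  have hIne : ∀ l, (I l).Nonempty := by
    intro l
    obtain ⟨i, hi⟩ := Quotient.exists_rep (e.symm l)
    exact ⟨i, by rw [hI]; erw [hi]; simp⟩
  refine ⟨t₀, Fintype.card (Quotient r), I, hIne, ?_, fun i => ⟨_, (hI _ i).2 rfl⟩, ?_⟩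
  · intro l m hlm
    rw [Finset.disjoint_left]
    intro i hi hi'
    exact hlm (((hI l i).1 hi).symm.trans ((hI m i).1 hi'))
  intro X hX
  have hcons : ∀ l, ∃ L : ℝ, ∀ i ∈ I l, Tendsto (fun t => X t i) atTop (nhds L) := by
    intro l
    refine class_consensus hδ hδ1 hstoch hdiag hsym hmin (hIne l) (t₀ := t₀) ?_ ?_ hX
    · intro t ht i hi j hj
      exact ht₀ t ht i j fun h => hj (hEI l i j hi h)
    · intro S hS hSn hne s
      by_contra hcon
      push Not at hcon
      have hclosed : ∀ i j, E i j → i ∈ S → j ∈ S := by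
        intro i j hij hi
        by_contra hj
        obtain ⟨t, ht, hpos⟩ := Filter.frequently_atTop.1 hij s
        exact absurd hpos (not_lt.2 (hcon t ht i hi j (hEI l i j (hS hi) hij) hj))
      have hEsymm : ∀ i j, E i j → E j i := fun i j h => h.mono fun t ht => (hsym t i j).1 ht
      have hiff : ∀ i j, Relation.EqvGen E i j → (i ∈ S ↔ j ∈ S) := by
        intro i j h
        induction h with
        | rel i j h => exact ⟨hclosed i j h, hclosed j i (hEsymm i j h)⟩
        | refl i => rfl
        | symm i j _ ih => exact ih.symm
        | trans i j k _ _ ih1 ih2 => exact ih1.trans ih2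
      obtain ⟨a, ha⟩ := hSn
      refine hne (Finset.Subset.antisymm hS fun j hj => ?_)
      have h1 : Quotient.mk r a = Quotient.mk r j :=
        e.injective (((hI l a).1 (hS ha)).trans ((hI l j).1 hj).symm)
      exact (hiff a j (Quotient.exact h1)).1 ha
  choose L hL using hcons
  refine ⟨fun i => L (e (Quotient.mk r i)), ?_, ?_⟩
  · rw [tendsto_pi_nhds]
    exact fun i => hL _ i ((hI _ i).2 rfl)
  · intro l i hi j hj
    change L _ = L _
    rw [(hI l i).1 hi, (hI l j).1 hj]
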